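/- arXiv:2012.13515 — 2 statements merged into one kernel-verified Lean document; each statement's English description precedes it below -/
import Mathlib

section
/- Let E ⊆ ℝ² be compact, ε > 0, x ∈ ∂E_ε, and let (x_n) be a sequence on ∂E_ε with x_n → x and x_n ≠ x for all n; set ξ_n := (x_n − x)/‖x_n − x‖. Then: (i) there exist ξ^{(1)}, ξ^{(2)} ∈ Ξ_ext(x) and a partition of the index set ℕ into two sets such that along each infinite set of the partition the sequence (ξ_n) converges, with limit ξ^{(1)} respectively ξ^{(2)}; (ii) if ξ := lim ξ_n exists, then (a) every sequence (y_n) with y_n ∈ Π_E(x_n) for all n has a subsequence converging to some y ∈ Π_ext(x) satisfying ⟨y − x, ξ⟩ = 0, and moreover ξ ∈ Ξ_ext(x); and (b) every sequence (η_n) with η_n ∈ Ξ_ext(x_n) for all n satisfies |⟨η_n, ξ⟩| → 1 as n → ∞. -/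
open Metric Set Filter Topology RealInnerProductSpace

noncomputable section

/-- The Euclidean plane. -/
abbrev Plane := EuclideanSpace ℝ (Fin 2)

/-- The closed ε-neighbourhood of a set `E ⊆ ℝ²`: the closure of the union of open
ε-balls centred at points of `E`. -/
def eNbhd (E : Set Plane) (ε : ℝ) : Set Plane :=
  closure (⋃ y ∈ E, ball y ε)

/-- The set of contributors of a boundary point `x ∈ ∂E_ε`: points `y ∈ ∂E` with
`‖y - x‖ = ε`. -/
def contributors (E : Set Plane) (ε : ℝ) (x : Plane) : Set Plane :=
  {y ∈ frontier E | ‖y - x‖ = ε}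

/-- The set of outward directions from `E_ε` at `x`. -/
def outwardDirs (E : Set Plane) (ε : ℝ) (x : Plane) : Set Plane :=
  {ξ | ‖ξ‖ = 1 ∧ ∃ u : ℕ → Plane, (∀ n, u n ∉ eNbhd E ε) ∧
    Tendsto u atTop (nhds x) ∧
    Tendsto (fun n => (‖u n - x‖)⁻¹ • (u n - x)) atTop (nhds ξ)}

/-- The set of extremal outward directions at `x`: outward directions perpendicular to
`y - x` for some contributor `y`. -/
def extOutward (E : Set Plane) (ε : ℝ) (x : Plane) : Set Plane :=
  {ξ ∈ outwardDirs E ε x | ∃ y ∈ contributors E ε x, ⟪y - x, ξ⟫ = 0}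

/-- The set of extremal contributors at `x`: contributors perpendicular to some
outward direction. -/
def extContrib (E : Set Plane) (ε : ℝ) (x : Plane) : Set Plane :=
  {y ∈ contributors E ε x | ∃ ξ ∈ outwardDirs E ε x, ⟪y - x, ξ⟫ = 0}

/-- The set of extremal pairs at `x`. -/
def extPairs (E : Set Plane) (ε : ℝ) (x : Plane) : Set (Plane × Plane) :=
  {p | p.1 ∈ outwardDirs E ε x ∧ p.2 ∈ contributors E ε x ∧ ⟪p.2 - x, p.1⟫ = 0}

/-- The set `Unp(E)` of boundary points of `E_ε` with a unique contributor. -/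
def unp (E : Set Plane) (ε : ℝ) : Set Plane :=
  {x ∈ frontier (eNbhd E ε) | ∃ y, contributors E ε x = {y}}

/-- A boundary point `x ∈ ∂E_ε` is smooth if `x ∈ Unp(E)` and a whole neighbourhood of
`x` on the boundary consists of points of `Unp(E)`. -/
def IsSmoothPt (E : Set Plane) (ε : ℝ) (x : Plane) : Prop :=
  x ∈ unp E ε ∧ ∃ r > 0, frontier (eNbhd E ε) ∩ ball x r ⊆ unp E ε

/-- A singularity: a non-smooth boundary point of `E_ε`. -/
def IsSingularity (E : Set Plane) (ε : ℝ) (x : Plane) : Prop :=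
  x ∈ frontier (eNbhd E ε) ∧ ¬ IsSmoothPt E ε x

/-- The open half-ball of radius `r` at `x` in direction `v`. -/
def halfBall (x v : Plane) (r : ℝ) : Set Plane :=
  {z ∈ ball x r | 0 < ⟪z - x, v⟫}

/-- `V` is a connected component of the complement of `E_ε`. -/
def IsCompOfCompl (E : Set Plane) (ε : ℝ) (V : Set Plane) : Prop :=
  ∃ z, z ∉ eNbhd E ε ∧ V = connectedComponentIn (eNbhd E ε)ᶜ z

/-- The closed geodesic arc-segment between `v, w ∈ S¹`. -/
def arcSeg (v w : Plane) : Set Plane :=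
  {u | ‖u‖ = 1 ∧ ∃ a b : ℝ, 0 ≤ a ∧ 0 ≤ b ∧ u = a • v + b • w}

/-- The open geodesic arc-segment between `v, w ∈ S¹`. -/
def openArc (v w : Plane) : Set Plane :=
  arcSeg v w \ {v, w}

/-- A chain sequence for `x`: a sequence of singularities converging to `x` whose
extremal contributors become increasingly opposed. -/
def IsChainSeq (E : Set Plane) (ε : ℝ) (x : Plane) (u : ℕ → Plane) : Prop :=
  (∀ n, IsSingularity E ε (u n)) ∧ (∀ n, u n ≠ x) ∧ Tendsto u atTop (nhds x) ∧
  ∃ y1 y2 : ℕ → Plane, (∀ n, extContrib E ε (u n) = {y1 n, y2 n}) ∧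
    Tendsto (fun n => ⟪ε⁻¹ • (y1 n - u n), ε⁻¹ • (y2 n - u n)⟫) atTop (nhds (-1))

/-- Type S1: wedge. -/
def IsWedge (E : Set Plane) (ε : ℝ) (x : Plane) : Prop :=
  IsSingularity E ε x ∧
  ∃ ξ₁ ξ₂, extOutward E ε x = {ξ₁, ξ₂} ∧ ξ₁ ≠ ξ₂ ∧ ξ₁ ≠ -ξ₂

/-- Type S2: one-sided sharp singularity. -/
def IsSharp (E : Set Plane) (ε : ℝ) (x : Plane) : Prop :=
  IsSingularity E ε x ∧ (∃ ξ, extOutward E ε x = {ξ}) ∧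
  ∃ δ > 0, IsConnected (ball x δ ∩ (eNbhd E ε)ᶜ)

/-- Type S3: sharp-sharp singularity. -/
def IsSharpSharp (E : Set Plane) (ε : ℝ) (x : Plane) : Prop :=
  IsSingularity E ε x ∧ ∃ ξ, extOutward E ε x = {ξ, -ξ} ∧
    ∀ η ∈ ({ξ, -ξ} : Set Plane), ∃ δ > 0, IsConnected (halfBall x η δ ∩ (eNbhd E ε)ᶜ)

/-- Type S4: one-sided shallow singularity. -/
def IsShallow (E : Set Plane) (ε : ℝ) (x : Plane) : Prop :=
  IsSingularity E ε x ∧ x ∈ unp E ε ∧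
  ∃ ξ₁ ξ₂, extOutward E ε x = {ξ₁, ξ₂} ∧
    (∃ δ > 0, halfBall x ξ₁ δ ∩ frontier (eNbhd E ε) ⊆ unp E ε) ∧
    (∀ δ > 0, ¬ (halfBall x ξ₂ δ ∩ frontier (eNbhd E ε) ⊆ unp E ε))

/-- Type S5: shallow-shallow singularity. -/
def IsShallowShallow (E : Set Plane) (ε : ℝ) (x : Plane) : Prop :=
  IsSingularity E ε x ∧ x ∈ unp E ε ∧
  ∃ ξ₁ ξ₂, extOutward E ε x = {ξ₁, ξ₂} ∧
    ∀ η ∈ ({ξ₁, ξ₂} : Set Plane), ∀ δ > 0,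
      ¬ (halfBall x η δ ∩ frontier (eNbhd E ε) ⊆ unp E ε)

/-- Type S6: one-sided chain singularity. -/
def IsChainSing (E : Set Plane) (ε : ℝ) (x : Plane) : Prop :=
  IsSingularity E ε x ∧ (∃ ξ, extOutward E ε x = {ξ}) ∧
  ∃ u, IsChainSeq E ε x u

/-- Type S7: chain-chain singularity. -/
def IsChainChain (E : Set Plane) (ε : ℝ) (x : Plane) : Prop :=
  IsSingularity E ε x ∧ ∃ ξ, extOutward E ε x = {ξ, -ξ} ∧
    ∀ η ∈ ({ξ, -ξ} : Set Plane), ∃ δ > 0, ∃ u,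
      IsChainSeq E ε x u ∧ ∀ n, u n ∈ halfBall x η δ

/-- Type S8: sharp-chain singularity. -/
def IsSharpChain (E : Set Plane) (ε : ℝ) (x : Plane) : Prop :=
  IsSingularity E ε x ∧ ∃ ξ, extOutward E ε x = {ξ, -ξ} ∧
    (∃ δ > 0, IsConnected (halfBall x ξ δ ∩ (eNbhd E ε)ᶜ)) ∧
    (∃ δ > 0, ∃ u, IsChainSeq E ε x u ∧ ∀ n, u n ∈ halfBall x (-ξ) δ)

/-!
Every point `w` outside the interior of `E_ε` satisfies `‖y - x‖ = ε ≤ ‖y - w‖` for each contributor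
`y` at `x`; expanding the square, a limit `ξ` of the directions from `x` to such points satisfies
`⟪y - x, ξ⟫ ≤ 0`. If these points are boundary points `u n`, the roles of `x` and `u n` can be
exchanged, so that a limit `y` of contributors at `u n` also satisfies `⟪y - x, ξ⟫ ≥ 0`. Hence every
cluster point of the directions is extremal.

At most two extremal directions exist. If `a`, `b`, `c` are extremal, then `b` and `c` lie in the
half-plane bounded by the line through `a`, so `ω a b * ω a c ≥ 0` for the area form `ω`, and
likewise for the two cyclic permutations. The product of the three left-hand sides is
`-(ω a b * ω b c * ω c a) ^ 2`, so two of the three unit vectors are parallel.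

An extremal direction at `u n` is perpendicular to `y n - u n` for some contributor `y n`, and
`⟪y n - u n, ξ⟫` tends to `0`; by Pythagoras in the plane it aligns with `ξ` up to sign.
-/

section Topology

lemma exists_seq_tendsto_of_forall_mem_closure {ι X Y : Type*} [TopologicalSpace X]
    [TopologicalSpace Y] [FirstCountableTopology X] [FirstCountableTopology Y] {l : Filter ι}
    [l.NeBot] {s : Set X} {f : X → Y} {u : ι → X} {a : X} {b : Y} (hu : ∀ i, u i ∈ closure s)
    (hf : ∀ i, ContinuousAt f (u i)) (hua : Tendsto u l (𝓝 a))
    (hfu : Tendsto (fun i => f (u i)) l (𝓝 b)) :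
    ∃ w : ℕ → X, (∀ n, w n ∈ s) ∧ Tendsto w atTop (𝓝 a) ∧
      Tendsto (fun n => f (w n)) atTop (𝓝 b) := by
  have hgraph : (a, b) ∈ closure ((fun z => (z, f z)) '' s) :=
    isClosed_closure.mem_of_tendsto (hua.prodMk_nhds hfu)
      (.of_forall fun i => mem_closure_image (continuousAt_id.prodMk (hf i)) (hu i))
  obtain ⟨p, hp, hlim⟩ := mem_closure_iff_seq_limit.1 hgraph
  choose w hw hwp using hp
  obtain rfl : (fun n => (w n, f (w n))) = p := funext hwp
  exact ⟨w, hw, hlim.fst_nhds, hlim.snd_nhds⟩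

lemma exists_tendsto_inf_principal_compl {ι X : Type*} [MetricSpace X] {l : Filter ι} {K : Set X}
    (hK : IsCompact K) {f : ι → X} (hf : ∀ᶠ i in l, f i ∈ K) {p q : X}
    (hpq : ∀ c, MapClusterPt c l f → c = p ∨ c = q) :
    ∃ S : Set ι, Tendsto f (l ⊓ 𝓟 S) (𝓝 p) ∧ Tendsto f (l ⊓ 𝓟 Sᶜ) (𝓝 q) := by
  have tendsto_of_closer {T : Set ι} {p q : X} (hpq : ∀ c, MapClusterPt c l f → c = p ∨ c = q)
      (hT : ∀ i ∈ T, dist (f i) p ≤ dist (f i) q) : Tendsto f (l ⊓ 𝓟 T) (𝓝 p) := by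
    refine hK.tendsto_nhds_of_unique_mapClusterPt (hf.filter_mono inf_le_left) fun c _ hc => ?_
    have hclosed : IsClosed {z | dist z p ≤ dist z q} :=
      isClosed_le (by fun_prop) (by fun_prop)
    have hcloser : dist c p ≤ dist c q :=
      hclosed.mem_of_mapClusterPt hc (eventually_inf_principal.2 (.of_forall hT))
    rcases hpq c (hc.mono inf_le_left) with rfl | rfl
    · rfl
    · exact dist_le_zero.1 (hcloser.trans_eq (dist_self c))
  exact ⟨{i | dist (f i) p ≤ dist (f i) q}, tendsto_of_closer hpq fun _ hi => hi,
    tendsto_of_closer (fun c hc => (hpq c hc).symm) fun _ hi => (le_total _ _).resolve_left hi⟩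

end Topology

lemma continuousAt_normalize {V : Type*} [NormedAddCommGroup V] [NormedSpace ℝ V] {v : V}
    (hv : v ≠ 0) : ContinuousAt NormedSpace.normalize v :=
  (continuousAt_id.norm.inv₀ (norm_ne_zero_iff.2 hv)).smul continuousAt_id

section InnerProduct

variable {V : Type*} [NormedAddCommGroup V] [InnerProductSpace ℝ V]

lemma two_mul_inner_normalize_le_norm {a b : V} (h : ‖a‖ ≤ ‖a - b‖) :
    2 * ⟪a, NormedSpace.normalize b⟫ ≤ ‖b‖ := by
  rcases eq_or_ne b 0 with rfl | hb
  · simp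
  have hb' : 0 < ‖b‖ := norm_pos_iff.2 hb
  have hsq : ‖a‖ ^ 2 ≤ ‖a - b‖ ^ 2 := by gcongr
  have hinner : 2 * ⟪a, b⟫ ≤ ‖b‖ ^ 2 := by
    rw [norm_sub_sq_real] at hsq
    linarith
  calc 2 * ⟪a, NormedSpace.normalize b⟫ = 2 * ⟪a, b⟫ / ‖b‖ := by
        rw [NormedSpace.normalize, inner_smul_right]
        ring
    _ ≤ ‖b‖ := by rwa [div_le_iff₀ hb', ← sq]

lemma inner_nonpos_of_tendsto_normalize {ι : Type*} {l : Filter ι} [l.NeBot] {a b : ι → V}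
    {k ξ : V} (ha : Tendsto a l (𝓝 k)) (hb : Tendsto b l (𝓝 0))
    (hξ : Tendsto (fun i => NormedSpace.normalize (b i)) l (𝓝 ξ))
    (hab : ∀ i, ‖a i‖ ≤ ‖a i - b i‖) : ⟪k, ξ⟫ ≤ 0 := by
  have hlim : 2 * ⟪k, ξ⟫ ≤ ‖(0 : V)‖ :=
    le_of_tendsto_of_tendsto' ((ha.inner hξ).const_mul 2) hb.norm
      fun i => two_mul_inner_normalize_le_norm (hab i)
  rw [norm_zero] at hlim
  linarith

end InnerProduct

section TwoDim

variable {V : Type*} [NormedAddCommGroup V] [InnerProductSpace ℝ V]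
  [Fact (Module.finrank ℝ V = 2)]

lemma norm_sq_mul_inner_sq_add_of_inner_eq_zero {k η : V} (h : ⟪k, η⟫ = 0) (ξ : V) :
    ‖k‖ ^ 2 * ⟪η, ξ⟫ ^ 2 + ‖η‖ ^ 2 * ⟪k, ξ⟫ ^ 2 = ‖k‖ ^ 2 * ‖η‖ ^ 2 * ‖ξ‖ ^ 2 := by
  rcases eq_or_ne k 0 with rfl | hk
  · simp
  have : FiniteDimensional ℝ V := .of_fact_finrank_eq_two
  let o : Orientation ℝ V (Fin 2) := (Module.finBasisOfFinrankEq ℝ V Fact.out).orientation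
  have hkη : o.areaForm k η ^ 2 = ‖k‖ ^ 2 * ‖η‖ ^ 2 := by
    simpa [h] using o.inner_sq_add_areaForm_sq k η
  have hηξ : -(o.areaForm k η * ⟪k, ξ⟫) = ‖k‖ ^ 2 * o.areaForm η ξ := by
    simpa [h] using o.inner_mul_areaForm_sub k η ξ
  have hk' : ‖k‖ ^ 2 ≠ 0 := by simpa using hk
  refine mul_left_cancel₀ hk' ?_
  linear_combination (‖k‖ ^ 2) ^ 2 * o.inner_sq_add_areaForm_sq η ξ - ⟪k, ξ⟫ ^ 2 * hkη
    + (-(o.areaForm k η * ⟪k, ξ⟫) + ‖k‖ ^ 2 * o.areaForm η ξ) * hηξ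

lemma tendsto_abs_inner_of_inner_eq_zero {ι : Type*} {l : Filter ι} {k η : ι → V} {ξ : V}
    {r : ℝ} (hr : 0 < r) (hk : ∀ i, ‖k i‖ = r) (hη : ∀ i, ‖η i‖ = 1) (hξ : ‖ξ‖ = 1)
    (hkη : ∀ i, ⟪k i, η i⟫ = 0) (hkξ : Tendsto (fun i => ⟪k i, ξ⟫) l (𝓝 0)) :
    Tendsto (fun i => |⟪η i, ξ⟫|) l (𝓝 1) := by
  have habs (i : ι) : |⟪η i, ξ⟫| = √(1 - (⟪k i, ξ⟫ / r) ^ 2) := by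
    have hpyth := norm_sq_mul_inner_sq_add_of_inner_eq_zero (hkη i) ξ
    rw [hk, hη, hξ] at hpyth
    rw [← Real.sqrt_sq_eq_abs]
    congr 1
    field_simp
    linarith
  simp only [habs]
  simpa using (((hkξ.div_const r).pow 2).const_sub 1).sqrt

variable (o : Orientation ℝ V (Fin 2)) {a b c : V}

lemma areaForm_mul_areaForm_nonneg {k : V} (hk : k ≠ 0) (ha : ⟪k, a⟫ = 0) (hb : ⟪k, b⟫ ≤ 0)
    (hc : ⟪k, c⟫ ≤ 0) : 0 ≤ o.areaForm a b * o.areaForm a c := by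
  have areaForm_eq (v : V) : ‖k‖ ^ 2 * o.areaForm a v = -(o.areaForm k a * ⟪k, v⟫) := by
    simpa [ha] using (o.inner_mul_areaForm_sub k a v).symm
  have hprod : (‖k‖ ^ 2) ^ 2 * (o.areaForm a b * o.areaForm a c) =
      o.areaForm k a ^ 2 * (⟪k, b⟫ * ⟪k, c⟫) := by
    linear_combination ‖k‖ ^ 2 * o.areaForm a c * areaForm_eq b
      - o.areaForm k a * ⟪k, b⟫ * areaForm_eq c
  refine nonneg_of_mul_nonneg_right (hprod ▸ ?_) (by positivity : 0 < (‖k‖ ^ 2) ^ 2)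
  exact mul_nonneg (sq_nonneg _) (mul_nonneg_of_nonpos_of_nonpos hb hc)

lemma eq_or_eq_neg_of_areaForm_eq_zero (ha : ‖a‖ = 1) (hb : ‖b‖ = 1)
    (h : o.areaForm a b = 0) : a = b ∨ a = -b := by
  have hinner : ⟪a, b⟫ ^ 2 = 1 := by
    simpa [h, ha, hb] using o.inner_sq_add_areaForm_sq a b
  exact (sq_eq_one_iff.1 hinner).imp (inner_eq_one_iff_of_norm_eq_one ha hb).1
    (inner_eq_neg_one_iff_of_norm_eq_one ha hb).1

lemma eq_or_eq_or_eq_of_areaForm_eq_zero (ha : ‖a‖ = 1) (hb : ‖b‖ = 1) (hc : ‖c‖ = 1)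
    (hab : o.areaForm a b = 0) (h : 0 ≤ o.areaForm c a * o.areaForm c b) :
    a = b ∨ a = c ∨ b = c := by
  rcases eq_or_eq_neg_of_areaForm_eq_zero o ha hb hab with rfl | rfl
  · exact .inl rfl
  · have hcb : o.areaForm c b = 0 := by
      rw [map_neg] at h
      nlinarith
    rcases eq_or_eq_neg_of_areaForm_eq_zero o hc hb hcb with rfl | rfl <;> simp

lemma eq_or_eq_or_eq_of_areaForm_mul_nonneg (ha : ‖a‖ = 1) (hb : ‖b‖ = 1) (hc : ‖c‖ = 1)
    (habc : 0 ≤ o.areaForm a b * o.areaForm a c) (hbca : 0 ≤ o.areaForm b c * o.areaForm b a)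
    (hcab : 0 ≤ o.areaForm c a * o.areaForm c b) : a = b ∨ a = c ∨ b = c := by
  have hzero : o.areaForm a b * o.areaForm b c * o.areaForm c a = 0 := by
    rw [← sq_nonpos_iff]
    calc (o.areaForm a b * o.areaForm b c * o.areaForm c a) ^ 2
        = -(o.areaForm a b * o.areaForm a c * (o.areaForm b c * o.areaForm b a) *
            (o.areaForm c a * o.areaForm c b)) := by
          rw [o.areaForm_swap a c, o.areaForm_swap b a, o.areaForm_swap c b]
          ring
      _ ≤ 0 := neg_nonpos.2 (mul_nonneg (mul_nonneg habc hbca) hcab)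
  rcases mul_eq_zero.1 hzero with hzero | hca
  · rcases mul_eq_zero.1 hzero with hab | hbc
    · exact eq_or_eq_or_eq_of_areaForm_eq_zero o ha hb hc hab hcab
    · have := eq_or_eq_or_eq_of_areaForm_eq_zero o hb hc ha hbc habc
      tauto
  · have := eq_or_eq_or_eq_of_areaForm_eq_zero o hc ha hb hca hbca
    tauto

end TwoDim

section Contributors

variable {E : Set Plane} {ε : ℝ} {x y w ξ : Plane} {u : ℕ → Plane}

lemma eNbhd_eq_closure_thickening : eNbhd E ε = closure (thickening ε E) := by
  rw [eNbhd, thickening_eq_biUnion_ball]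

lemma thickening_subset_interior_eNbhd : thickening ε E ⊆ interior (eNbhd E ε) :=
  interior_maximal (eNbhd_eq_closure_thickening ▸ subset_closure) isOpen_thickening

lemma eNbhd_subset_cthickening : eNbhd E ε ⊆ cthickening ε E :=
  eNbhd_eq_closure_thickening ▸ closure_thickening_subset_cthickening ε E

lemma le_norm_sub_of_notMem_interior_eNbhd (hy : y ∈ closure E)
    (hw : w ∉ interior (eNbhd E ε)) : ε ≤ ‖y - w‖ := by
  by_contra! hlt
  refine hw (thickening_subset_interior_eNbhd ?_)
  rw [← thickening_closure, mem_thickening_iff]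
  exact ⟨y, hy, by rwa [dist_comm, dist_eq_norm]⟩

lemma norm_sub_le_of_mem_contributors (hy : y ∈ contributors E ε x)
    (hw : w ∉ interior (eNbhd E ε)) : ‖y - x‖ ≤ ‖y - x - (w - x)‖ := by
  rw [hy.2, sub_sub_sub_cancel_right]
  exact le_norm_sub_of_notMem_interior_eNbhd (frontier_subset_closure hy.1) hw

lemma contributors_nonempty (hε : 0 < ε) (hx : x ∈ frontier (eNbhd E ε)) :
    (contributors E ε x).Nonempty := by
  have hx' : x ∈ cthickening ε E := eNbhd_subset_cthickening (isClosed_closure.frontier_subset hx)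
  rw [cthickening_eq_biUnion_closedBall E hε.le, mem_iUnion₂] at hx'
  obtain ⟨y, hy, hxy⟩ := hx'
  refine ⟨y, ⟨hy, fun hint => ?_⟩, le_antisymm (by rwa [← dist_eq_norm, dist_comm])
    (le_norm_sub_of_notMem_interior_eNbhd hy hx.2)⟩
  have hball : y ∈ closure (ball x ε) := by
    rwa [closure_ball x hε.ne', mem_closedBall_comm]
  obtain ⟨z, hzE, hz⟩ := mem_closure_iff.1 hball _ isOpen_interior hint
  have hle : ε ≤ ‖z - x‖ :=
    le_norm_sub_of_notMem_interior_eNbhd (subset_closure (interior_subset hzE)) hx.2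
  exact hle.not_gt (mem_ball_iff_norm.1 hz)

lemma mem_contributors_of_tendsto {ys : ℕ → Plane} (hconv : Tendsto u atTop (𝓝 x))
    (hys : ∀ n, ys n ∈ contributors E ε (u n)) (hy : Tendsto ys atTop (𝓝 y)) :
    y ∈ contributors E ε x := by
  refine ⟨isClosed_frontier.mem_of_tendsto hy (.of_forall fun n => (hys n).1), ?_⟩
  exact tendsto_nhds_unique (hy.sub hconv).norm
    (tendsto_const_nhds.congr fun n => (hys n).2.symm)

lemma inner_eq_zero_of_tendsto_contributors (hmem : ∀ n, u n ∈ frontier (eNbhd E ε))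
    (hconv : Tendsto u atTop (𝓝 x))
    (hξ : Tendsto (fun n => NormedSpace.normalize (u n - x)) atTop (𝓝 ξ)) {ys : ℕ → Plane}
    (hys : ∀ n, ys n ∈ contributors E ε (u n)) (hy : Tendsto ys atTop (𝓝 y)) :
    ⟪y - x, ξ⟫ = 0 := by
  have hyx : y ∈ contributors E ε x := mem_contributors_of_tendsto hconv hys hy
  have hx : x ∈ frontier (eNbhd E ε) :=
    isClosed_frontier.mem_of_tendsto hconv (.of_forall hmem)
  apply le_antisymm
  · exact inner_nonpos_of_tendsto_normalize tendsto_const_nhds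
      (tendsto_sub_nhds_zero_iff.2 hconv) hξ
      fun n => norm_sub_le_of_mem_contributors hyx (hmem n).2
  · have hneg : Tendsto (fun n => NormedSpace.normalize (x - u n)) atTop (𝓝 (-ξ)) :=
      hξ.neg.congr fun n => by rw [← NormedSpace.normalize_neg, neg_sub]
    have hzero : Tendsto (fun n => x - u n) atTop (𝓝 0) := by
      simpa using hconv.const_sub x
    have hle : ⟪y - x, -ξ⟫ ≤ 0 := inner_nonpos_of_tendsto_normalize (hy.sub hconv) hzero hneg
      fun n => norm_sub_le_of_mem_contributors (hys n) hx.2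
    rwa [inner_neg_right, neg_nonpos] at hle

lemma exists_subseq_tendsto_contributor (hmem : ∀ n, u n ∈ frontier (eNbhd E ε))
    (hconv : Tendsto u atTop (𝓝 x))
    (hξ : Tendsto (fun n => NormedSpace.normalize (u n - x)) atTop (𝓝 ξ)) {ys : ℕ → Plane}
    (hys : ∀ n, ys n ∈ contributors E ε (u n)) :
    ∃ y ∈ contributors E ε x, ⟪y - x, ξ⟫ = 0 ∧
      ∃ φ : ℕ → ℕ, StrictMono φ ∧ Tendsto (ys ∘ φ) atTop (𝓝 y) := by
  obtain ⟨k, -, φ, hφ, hk⟩ := (isCompact_sphere (0 : Plane) ε).tendsto_subseq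
    (x := fun n => ys n - u n) fun n => mem_sphere_zero_iff_norm.2 (hys n).2
  have hconvφ : Tendsto (u ∘ φ) atTop (𝓝 x) := hconv.comp hφ.tendsto_atTop
  have hy : Tendsto (ys ∘ φ) atTop (𝓝 (k + x)) :=
    (hk.add hconvφ).congr fun n => sub_add_cancel _ _
  exact ⟨k + x, mem_contributors_of_tendsto hconvφ (fun n => hys (φ n)) hy,
    inner_eq_zero_of_tendsto_contributors (fun n => hmem (φ n)) hconvφ
      (hξ.comp hφ.tendsto_atTop) (fun n => hys (φ n)) hy, φ, hφ, hy⟩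

lemma tendsto_inner_contributors_zero (hmem : ∀ n, u n ∈ frontier (eNbhd E ε))
    (hconv : Tendsto u atTop (𝓝 x))
    (hξ : Tendsto (fun n => NormedSpace.normalize (u n - x)) atTop (𝓝 ξ)) {ys : ℕ → Plane}
    (hys : ∀ n, ys n ∈ contributors E ε (u n)) :
    Tendsto (fun n => ⟪ys n - u n, ξ⟫) atTop (𝓝 0) := by
  refine tendsto_of_subseq_tendsto fun ψ hψ => ?_
  obtain ⟨y, -, hyξ, φ, hφ, hlim⟩ := exists_subseq_tendsto_contributor (fun n => hmem (ψ n))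
    (hconv.comp hψ) (hξ.comp hψ) (fun n => hys (ψ n))
  refine ⟨φ, hyξ ▸ ?_⟩
  exact (hlim.sub ((hconv.comp hψ).comp hφ.tendsto_atTop)).inner tendsto_const_nhds

end Contributors

section OutwardDirections

open scoped EuclideanSpace

variable {E : Set Plane} {ε : ℝ} {x y ξ : Plane} {u : ℕ → Plane}

lemma inner_nonpos_of_mem_outwardDirs (hy : y ∈ contributors E ε x)
    (hξ : ξ ∈ outwardDirs E ε x) : ⟪y - x, ξ⟫ ≤ 0 := by
  obtain ⟨-, w, hw, hconv, hdir⟩ := hξ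
  exact inner_nonpos_of_tendsto_normalize tendsto_const_nhds (tendsto_sub_nhds_zero_iff.2 hconv)
    hdir fun n => norm_sub_le_of_mem_contributors hy fun hint => hw n (interior_subset hint)

lemma eq_or_eq_or_eq_of_mem_extOutward (hε : 0 < ε) {a b c : Plane}
    (ha : a ∈ extOutward E ε x) (hb : b ∈ extOutward E ε x) (hc : c ∈ extOutward E ε x) :
    a = b ∨ a = c ∨ b = c := by
  let o : Orientation ℝ Plane (Fin 2) := (EuclideanSpace.basisFun (Fin 2) ℝ).toBasis.orientation
  have areaForm_nonneg {p q r : Plane} (hp : p ∈ extOutward E ε x) (hq : q ∈ outwardDirs E ε x)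
      (hr : r ∈ outwardDirs E ε x) : 0 ≤ o.areaForm p q * o.areaForm p r := by
    obtain ⟨-, y, hy, hyp⟩ := hp
    have hyx : y - x ≠ 0 := norm_pos_iff.1 (hε.trans_eq hy.2.symm)
    exact areaForm_mul_areaForm_nonneg o hyx hyp (inner_nonpos_of_mem_outwardDirs hy hq)
      (inner_nonpos_of_mem_outwardDirs hy hr)
  exact eq_or_eq_or_eq_of_areaForm_mul_nonneg o ha.1.1 hb.1.1 hc.1.1
    (areaForm_nonneg ha hb.1 hc.1) (areaForm_nonneg hb hc.1 ha.1) (areaForm_nonneg hc ha.1 hb.1)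

lemma exists_extOutward_subset_pair (hε : 0 < ε) (hξ : ξ ∈ extOutward E ε x) :
    ∃ η ∈ extOutward E ε x, extOutward E ε x ⊆ {ξ, η} := by
  by_cases h : ∃ η ∈ extOutward E ε x, η ≠ ξ
  · obtain ⟨η, hη, hne⟩ := h
    refine ⟨η, hη, fun ζ hζ => ?_⟩
    rcases eq_or_eq_or_eq_of_mem_extOutward hε hξ hη hζ with h | h | h
    · exact absurd h.symm hne
    · exact .inl h.symm
    · exact .inr h.symm
  · push Not at h
    exact ⟨ξ, hξ, fun ζ hζ => .inl (h ζ hζ)⟩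

lemma mem_outwardDirs_of_tendsto (hmem : ∀ n, u n ∈ frontier (eNbhd E ε)) (hne : ∀ n, u n ≠ x)
    (hconv : Tendsto u atTop (𝓝 x))
    (hξ : Tendsto (fun n => NormedSpace.normalize (u n - x)) atTop (𝓝 ξ)) :
    ξ ∈ outwardDirs E ε x := by
  have hsub (n : ℕ) : u n - x ≠ 0 := sub_ne_zero.2 (hne n)
  have hnorm : ‖ξ‖ = 1 := tendsto_nhds_unique hξ.norm
    (tendsto_const_nhds.congr fun n => (NormedSpace.norm_normalize (hsub n)).symm)
  have hclosure (n : ℕ) : u n ∈ closure (eNbhd E ε)ᶜ := closure_compl.ge (hmem n).2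
  have hcont (n : ℕ) : ContinuousAt (fun z => NormedSpace.normalize (z - x)) (u n) :=
    ContinuousAt.comp' (f := fun z => z - x) (continuousAt_normalize (hsub n)) (by fun_prop)
  exact ⟨hnorm, exists_seq_tendsto_of_forall_mem_closure hclosure hcont hconv hξ⟩

lemma mem_extOutward_of_tendsto (hε : 0 < ε) (hmem : ∀ n, u n ∈ frontier (eNbhd E ε))
    (hne : ∀ n, u n ≠ x) (hconv : Tendsto u atTop (𝓝 x))
    (hξ : Tendsto (fun n => NormedSpace.normalize (u n - x)) atTop (𝓝 ξ)) :
    ξ ∈ extOutward E ε x := by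
  choose ys hys using fun n => contributors_nonempty hε (hmem n)
  obtain ⟨y, hy, hyξ, -⟩ := exists_subseq_tendsto_contributor hmem hconv hξ hys
  exact ⟨mem_outwardDirs_of_tendsto hmem hne hconv hξ, y, hy, hyξ⟩

lemma exists_tendsto_normalize_sub_compl (hε : 0 < ε) (hmem : ∀ n, u n ∈ frontier (eNbhd E ε))
    (hne : ∀ n, u n ≠ x) (hconv : Tendsto u atTop (𝓝 x)) :
    ∃ ξ₁ ∈ extOutward E ε x, ∃ ξ₂ ∈ extOutward E ε x, ∃ S : Set ℕ,
      Tendsto (fun n => NormedSpace.normalize (u n - x)) (atTop ⊓ 𝓟 S) (𝓝 ξ₁) ∧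
      Tendsto (fun n => NormedSpace.normalize (u n - x)) (atTop ⊓ 𝓟 Sᶜ) (𝓝 ξ₂) := by
  have hcluster (ξ : Plane)
      (hξ : MapClusterPt ξ atTop fun n => NormedSpace.normalize (u n - x)) :
      ξ ∈ extOutward E ε x := by
    obtain ⟨φ, hφ, hlim⟩ := hξ.tendsto_subseq
    exact mem_extOutward_of_tendsto hε (fun n => hmem (φ n)) (fun n => hne (φ n))
      (hconv.comp hφ.tendsto_atTop) hlim
  have hsphere (n : ℕ) : NormedSpace.normalize (u n - x) ∈ sphere (0 : Plane) 1 :=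
    mem_sphere_zero_iff_norm.2 (NormedSpace.norm_normalize (sub_ne_zero.2 (hne n)))
  have hcompact : IsCompact (sphere (0 : Plane) 1) := isCompact_sphere 0 1
  obtain ⟨ξ₁, -, hξ₁⟩ := hcompact.exists_mapClusterPt (f := atTop)
    (tendsto_principal.2 (.of_forall hsphere))
  obtain ⟨ξ₂, hξ₂, hpair⟩ := exists_extOutward_subset_pair hε (hcluster ξ₁ hξ₁)
  exact ⟨ξ₁, hcluster ξ₁ hξ₁, ξ₂, hξ₂, exists_tendsto_inf_principal_compl hcompact
    (.of_forall hsphere) fun c hc => hpair (hcluster c hc)⟩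

lemma tendsto_abs_inner_extOutward (hε : 0 < ε) (hmem : ∀ n, u n ∈ frontier (eNbhd E ε))
    (hne : ∀ n, u n ≠ x) (hconv : Tendsto u atTop (𝓝 x))
    (hξ : Tendsto (fun n => NormedSpace.normalize (u n - x)) atTop (𝓝 ξ)) {ηs : ℕ → Plane}
    (hηs : ∀ n, ηs n ∈ extOutward E ε (u n)) :
    Tendsto (fun n => |⟪ηs n, ξ⟫|) atTop (𝓝 1) := by
  choose hout ys hys hperp using hηs
  have hnorm : ‖ξ‖ = 1 := (mem_outwardDirs_of_tendsto hmem hne hconv hξ).1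
  exact tendsto_abs_inner_of_inner_eq_zero hε (fun n => (hys n).2) (fun n => (hout n).1) hnorm
    hperp (tendsto_inner_contributors_zero hmem hconv hξ hys)

end OutwardDirections

theorem orientation_in_converging_sequences_general (E : Set Plane) {ε : ℝ} (hε : 0 < ε)
    (x : Plane) (u : ℕ → Plane) (hmem : ∀ n, u n ∈ frontier (eNbhd E ε)) (hne : ∀ n, u n ≠ x)
    (hconv : Tendsto u atTop (nhds x)) :
    (∃ ξ₁ ξ₂, ξ₁ ∈ extOutward E ε x ∧ ξ₂ ∈ extOutward E ε x ∧ ∃ S : Set ℕ,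
      (S.Infinite →
        Tendsto (fun n => (‖u n - x‖)⁻¹ • (u n - x)) (atTop ⊓ 𝓟 S) (nhds ξ₁)) ∧
      (Sᶜ.Infinite →
        Tendsto (fun n => (‖u n - x‖)⁻¹ • (u n - x)) (atTop ⊓ 𝓟 Sᶜ) (nhds ξ₂))) ∧
    (∀ ξ : Plane, Tendsto (fun n => (‖u n - x‖)⁻¹ • (u n - x)) atTop (nhds ξ) →
      (∀ ys : ℕ → Plane, (∀ n, ys n ∈ contributors E ε (u n)) →
        ∃ y ∈ extContrib E ε x, ⟪y - x, ξ⟫ = 0 ∧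
          ∃ φ : ℕ → ℕ, StrictMono φ ∧ Tendsto (ys ∘ φ) atTop (nhds y)) ∧
      ξ ∈ extOutward E ε x ∧
      (∀ ηs : ℕ → Plane, (∀ n, ηs n ∈ extOutward E ε (u n)) →
        Tendsto (fun n => |⟪ηs n, ξ⟫|) atTop (nhds 1))) := by
  refine ⟨?_, fun ξ hξ => ⟨fun ys hys => ?_, mem_extOutward_of_tendsto hε hmem hne hconv hξ,
    fun ηs hηs => tendsto_abs_inner_extOutward hε hmem hne hconv hξ hηs⟩⟩
  · obtain ⟨ξ₁, hξ₁, ξ₂, hξ₂, S, hS, hSc⟩ :=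
      exists_tendsto_normalize_sub_compl hε hmem hne hconv
    exact ⟨ξ₁, ξ₂, hξ₁, hξ₂, S, fun _ => hS, fun _ => hSc⟩
  · obtain ⟨y, hy, hyξ, φ, hφ, hlim⟩ :=
      exists_subseq_tendsto_contributor hmem hconv hξ hys
    have hout : ξ ∈ outwardDirs E ε x := mem_outwardDirs_of_tendsto hmem hne hconv hξ
    exact ⟨y, ⟨hy, ξ, hout, hyξ⟩, hyξ, φ, hφ, hlim⟩

/-- Orientation in converging sequences of boundary points. -/
theorem orientation_in_converging_sequences (E : Set Plane) (hE : IsCompact E) {ε : ℝ}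
    (hε : 0 < ε) (x : Plane) (hx : x ∈ frontier (eNbhd E ε)) (u : ℕ → Plane)
    (hmem : ∀ n, u n ∈ frontier (eNbhd E ε)) (hne : ∀ n, u n ≠ x)
    (hconv : Tendsto u atTop (nhds x)) :
    -- (i) splitting into two subsequences converging to extremal outward directions
    (∃ ξ₁ ξ₂, ξ₁ ∈ extOutward E ε x ∧ ξ₂ ∈ extOutward E ε x ∧ ∃ S : Set ℕ,
      (S.Infinite →
        Tendsto (fun n => (‖u n - x‖)⁻¹ • (u n - x)) (atTop ⊓ 𝓟 S) (nhds ξ₁)) ∧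
      (Sᶜ.Infinite →
        Tendsto (fun n => (‖u n - x‖)⁻¹ • (u n - x)) (atTop ⊓ 𝓟 Sᶜ) (nhds ξ₂))) ∧
    -- (ii) behaviour when the directions converge to a limit ξ
    (∀ ξ : Plane, Tendsto (fun n => (‖u n - x‖)⁻¹ • (u n - x)) atTop (nhds ξ) →
      -- (a) contributor sequences subconverge to extremal contributors, and ξ is extremal
      (∀ ys : ℕ → Plane, (∀ n, ys n ∈ contributors E ε (u n)) →
        ∃ y ∈ extContrib E ε x, ⟪y - x, ξ⟫ = 0 ∧
          ∃ φ : ℕ → ℕ, StrictMono φ ∧ Tendsto (ys ∘ φ) atTop (nhds y)) ∧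
      ξ ∈ extOutward E ε x ∧
      -- (b) extremal outward directions at u n align with ξ asymptotically
      (∀ ηs : ℕ → Plane, (∀ n, ηs n ∈ extOutward E ε (u n)) →
        Tendsto (fun n => |⟪ηs n, ξ⟫|) atTop (nhds 1))) :=
  orientation_in_converging_sequences_general E hε x u hmem hne hconv

end
end

section
/- Let E ⊆ ℝ² be compact, ε > 0, and x ∈ ∂E_ε. Then T_x(E_ε) = Ξ_ext(x): the set of unit tangent vectors of E_ε at x coincides with the set of extremal outward directions at x. -/
open Metric Set Filter Topology RealInnerProductSpace

noncomputable section

/-- The set of unit tangent vectors of `E_ε` at `x`: unit vectors arising as limits of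
normalised directions of sequences of boundary points converging to `x`. -/
def tangentSet (E : Set Plane) (ε : ℝ) (x : Plane) : Set Plane :=
  {v | ‖v‖ = 1 ∧ ∃ u : ℕ → Plane, (∀ n, u n ∈ frontier (eNbhd E ε)) ∧ (∀ n, u n ≠ x) ∧
    Tendsto u atTop (nhds x) ∧
    Tendsto (fun n => (‖u n - x‖)⁻¹ • (u n - x)) atTop (nhds v)}

/-!
Write `S = E_ε`. Up to normalisation, tangents and outward directions at `x` are the elements of the
positive tangent cones of `∂S` and of `Sᶜ`, and the former cone lies in the latter because `∂S` is
contained in the closure of `Sᶜ`.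

Let `v = lim cₙ • dₙ` be tangent, with `x + dₙ ∈ ∂S` and `dₙ → 0`, and let `y` be a limit of
contributors `yₙ` of `x + dₙ`. Since no point of `∂S` is nearer to `y` than `x`, the derivative of
`‖y - ·‖²` at `x` in the direction `v` is nonnegative, which says `⟪y - x, v⟫ ≤ 0`; and
`‖yₙ - x - dₙ‖ = ε ≤ ‖yₙ - x‖` gives `0 ≤ ⟪yₙ - x, dₙ⟫`, hence `0 ≤ ⟪y - x, v⟫`.

Conversely, `S` contains the closed `ε`-ball around a contributor `y`, whose boundary is tangent
at `x` to every `v` orthogonal to `y - x`. If such a `v` is the limit of `cₙ • dₙ` with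
`x + dₙ ∉ S`, then `x + dₙ` is at distance `o(‖dₙ‖)` from `S`, and replacing it by a nearest point
of `S`, which lies on `∂S`, does not change the limit direction.
-/

section MetricSpace

variable {X : Type*} [PseudoMetricSpace X] {E : Set X} {ε : ℝ} {x y : X}

lemma infDist_eq_of_mem_frontier_cthickening (hε : 0 ≤ ε) (hx : x ∈ frontier (cthickening ε E)) :
    infDist x E = ε := by
  rw [infDist, frontier_cthickening_subset E hx, ENNReal.toReal_ofReal hε]

lemma le_dist_of_mem_frontier_cthickening (hε : 0 ≤ ε) (hx : x ∈ frontier (cthickening ε E))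
    (hy : y ∈ closure E) : ε ≤ dist x y := by
  rw [← infDist_eq_of_mem_frontier_cthickening hε hx, ← infDist_closure]
  exact infDist_le_dist_of_mem hy

lemma exists_dist_eq_of_mem_frontier_cthickening [ProperSpace X] (hε : 0 ≤ ε)
    (hx : x ∈ frontier (cthickening ε E)) : ∃ y ∈ closure E, dist x y = ε := by
  have hE : E.Nonempty := by
    rw [nonempty_iff_ne_empty]
    rintro rfl
    simp at hx
  obtain ⟨y, hy, hxy⟩ := exists_mem_closure_infDist_eq_dist hE x
  exact ⟨y, hy, hxy ▸ infDist_eq_of_mem_frontier_cthickening hε hx⟩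

end MetricSpace

section NormedSpace

variable {V : Type*} [NormedAddCommGroup V] [NormedSpace ℝ V] {E s : Set V} {ε : ℝ} {x y v : V}

lemma mem_frontier_of_dist_eq_infDist (hy : y ∈ closure E) (hxy : dist x y = infDist x E)
    (hpos : infDist x E ≠ 0) : y ∈ frontier E := by
  refine ⟨hy, fun hyint => ?_⟩
  have hball : y ∈ closure (ball x (infDist x E)) := by
    rw [closure_ball x hpos, mem_closedBall, dist_comm, hxy]
  obtain ⟨z, hzE, hzball⟩ := mem_closure_iff.1 hball _ isOpen_interior hyint
  exact disjoint_left.1 disjoint_ball_infDist hzball (interior_subset hzE)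

lemma infDist_cthickening (hε : 0 ≤ ε) (hE : E.Nonempty) (x : V) :
    infDist x (cthickening ε E) = max (infDist x E - ε) 0 := by
  rw [infDist, infEDist_cthickening, infDist]
  lift infEDist x E to NNReal using infEDist_ne_top hE with r
  lift ε to NNReal using hε
  rw [ENNReal.ofReal_coe_nnreal, ← ENNReal.coe_sub]
  exact NNReal.coe_sub_def

lemma posTangentConeAt_frontier_subset_compl (s : Set V) (x : V) :
    posTangentConeAt (frontier s) x ⊆ posTangentConeAt sᶜ x := by
  have hsub : frontier s ⊆ closure sᶜ := frontier_compl s ▸ frontier_subset_closure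
  exact (tangentConeAt_mono hsub).trans tangentConeAt_closure.subset

lemma mem_of_mem_posTangentConeAt (hs : IsClosed s) (hv : v ∈ posTangentConeAt s x) : x ∈ s :=
  hs.closure_subset (mem_closure_of_nonempty_tangentConeAt ⟨v, hv⟩)

lemma mem_posTangentConeAt_of_tendsto_direction {ι : Type*} {l : Filter ι} [l.NeBot] {u : ι → V}
    (hus : ∀ i, u i ∈ s) (hu : Tendsto u l (𝓝 x))
    (hdir : Tendsto (fun i => ‖u i - x‖⁻¹ • (u i - x)) l (𝓝 v)) : v ∈ posTangentConeAt s x :=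
  mem_tangentConeAt_of_seq l (fun i => ‖u i - x‖₊⁻¹) (fun i => u i - x)
    (tendsto_sub_nhds_zero_iff.2 hu) (.of_forall fun i => by simpa using hus i) hdir

lemma exists_seq_tendsto_direction_of_mem_posTangentConeAt (hv : v ≠ 0)
    (hvs : v ∈ posTangentConeAt s x) :
    ∃ u : ℕ → V, (∀ n, u n ∈ s) ∧ (∀ n, u n ≠ x) ∧ Tendsto u atTop (𝓝 x) ∧
      Tendsto (fun n => ‖u n - x‖⁻¹ • (u n - x)) atTop (𝓝 (‖v‖⁻¹ • v)) := by
  obtain ⟨c, d, hd, hds, hcd⟩ := mem_tangentConeAt_iff_exists_seq.1 hvs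
  have hcd_ne : ∀ᶠ n in atTop, c n • d n ≠ 0 := hcd.eventually_ne hv
  have hdir : Tendsto (fun n => ‖d n‖⁻¹ • d n) atTop (𝓝 (‖v‖⁻¹ • v)) := by
    refine ((hcd.norm.inv₀ (norm_ne_zero_iff.2 hv)).smul hcd).congr' ?_
    filter_upwards [hcd_ne] with n hn
    have hc : 0 < (c n : ℝ) := NNReal.coe_pos.2 (pos_of_ne_zero (left_ne_zero_of_smul hn))
    exact NormedSpace.normalize_smul_of_pos hc (d n)
  obtain ⟨N, hN⟩ := eventually_atTop.1 (hds.and hcd_ne)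
  have hshift := tendsto_add_atTop_nat N
  refine ⟨fun n => x + d (n + N), fun n => (hN _ (Nat.le_add_left N n)).1, fun n => ?_, ?_, ?_⟩
  · simpa using right_ne_zero_of_smul (hN _ (Nat.le_add_left N n)).2
  · simpa using (hd.comp hshift).const_add x
  · simpa only [add_sub_cancel_left, Function.comp_def] using hdir.comp hshift

lemma exists_mem_frontier_dist_eq_infDist [ProperSpace V] (hs : s.Nonempty) (hx : x ∉ s) :
    ∃ y ∈ frontier s, dist x y = infDist x s := by
  have : FiniteDimensional ℝ V := .of_locallyCompactSpace ℝ
  obtain ⟨y, hy, hxy⟩ :=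
    exists_mem_frontier_infDist_compl_eq_dist (mem_compl hx) (compl_ne_univ.2 hs)
  rw [frontier_compl] at hy
  rw [compl_compl] at hxy
  exact ⟨y, hy, hxy.symm⟩

lemma mem_posTangentConeAt_frontier_of_tendsto_infDist [ProperSpace V] {ι : Type*} {l : Filter ι}
    [l.NeBot] {c : ι → NNReal} {d : ι → V} (hx : x ∈ closure s) (hd : Tendsto d l (𝓝 0))
    (hds : ∀ᶠ i in l, x + d i ∉ s) (hcd : Tendsto (fun i => c i • d i) l (𝓝 v))
    (hdist : Tendsto (fun i => c i * infDist (x + d i) s) l (𝓝 0)) :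
    v ∈ posTangentConeAt (frontier s) x := by
  have hs : s.Nonempty := closure_nonempty_iff.1 ⟨x, hx⟩
  choose! b hbs hb using fun z (hz : z ∉ s) => exists_mem_frontier_dist_eq_infDist hs hz
  have hinfDist : Tendsto (fun i => infDist (x + d i) s) l (𝓝 0) := by
    rw [← infDist_zero_of_mem_closure hx]
    exact (continuous_infDist_pt s).continuousAt.tendsto.comp (by simpa using hd.const_add x)
  have hnorm : ∀ᶠ i in l, ‖b (x + d i) - (x + d i)‖ = infDist (x + d i) s :=
    hds.mono fun i hi => by rw [← dist_eq_norm', hb _ hi]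
  have hb0 : Tendsto (fun i => b (x + d i) - (x + d i)) l (𝓝 0) :=
    tendsto_zero_iff_norm_tendsto_zero.2 (hinfDist.congr' (hnorm.mono fun _ h => h.symm))
  have hcb0 : Tendsto (fun i => c i • (b (x + d i) - (x + d i))) l (𝓝 0) := by
    refine tendsto_zero_iff_norm_tendsto_zero.2 (hdist.congr' (hnorm.mono fun i h => ?_))
    beta_reduce
    rw [NNReal.smul_def, norm_smul, h, Real.norm_of_nonneg (c i).coe_nonneg]
  refine mem_tangentConeAt_of_seq l c (fun i => b (x + d i) - x) ?_ ?_ ?_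
  · simpa using (hb0.add hd).congr fun i => by abel
  · exact hds.mono fun i hi => by simpa using hbs _ hi
  · rw [← zero_add v]
    refine (hcb0.add hcd).congr fun i => ?_
    rw [← smul_add]
    congr 1
    abel

end NormedSpace

section InnerProductSpace

variable {V : Type*} [NormedAddCommGroup V] [InnerProductSpace ℝ V] {E s : Set V} {ε : ℝ}
  {x y v : V}

lemma inner_sub_nonpos_of_mem_posTangentConeAt (hxy : ∀ z ∈ s, dist x y ≤ dist z y)
    (hv : v ∈ posTangentConeAt s x) : ⟪y - x, v⟫ ≤ 0 := by
  have hmin : IsMinOn (fun z => ‖z - y‖ ^ 2) s x := fun z hz => by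
    simpa [dist_eq_norm] using pow_le_pow_left₀ dist_nonneg (hxy z hz) 2
  have hderiv := ((hasFDerivAt_id x).sub_const y).norm_sq.hasFDerivWithinAt (s := s)
  have hnonneg := hmin.localize.hasFDerivWithinAt_nonneg hderiv hv
  simpa [inner_sub_left] using hnonneg

lemma inner_nonneg_of_norm_sub_le (h : ‖x - y‖ ≤ ‖x‖) : 0 ≤ ⟪x, y⟫ := by
  have hsq : ‖x - y‖ ^ 2 ≤ ‖x‖ ^ 2 := pow_le_pow_left₀ (norm_nonneg _) h 2
  rw [norm_sub_sq_real] at hsq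
  linarith [sq_nonneg ‖y‖]

lemma exists_inner_sub_nonneg_of_mem_posTangentConeAt_frontier_cthickening [ProperSpace V]
    (hε : 0 ≤ ε) (hv : v ∈ posTangentConeAt (frontier (cthickening ε E)) x) :
    ∃ y ∈ closure E, dist x y = ε ∧ 0 ≤ ⟪y - x, v⟫ := by
  have hx := mem_of_mem_posTangentConeAt isClosed_frontier hv
  obtain ⟨c, d, hd, hds, hcd⟩ := mem_tangentConeAt_iff_exists_seq.1 hv
  choose! y hyE hy using fun z => exists_dist_eq_of_mem_frontier_cthickening (x := z) (E := E) hε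
  have hxd : Tendsto (fun n => x + d n) atTop (𝓝 x) := by simpa using hd.const_add x
  have hbounded : ∀ᶠ n in atTop, y (x + d n) ∈ closedBall x (1 + ε) := by
    filter_upwards [hds, hxd.eventually (closedBall_mem_nhds x one_pos)] with n hn hn1
    rw [mem_closedBall, dist_comm]
    exact (dist_triangle_left x _ _).trans (add_le_add hn1 (hy _ hn).le)
  obtain ⟨y₀, -, φ, hφ, hlim⟩ :=
    tendsto_subseq_of_frequently_bounded isBounded_closedBall hbounded.frequently
  have hφ' := hφ.tendsto_atTop
  have hdsφ := hφ'.eventually hds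
  refine ⟨y₀, isClosed_closure.mem_of_tendsto hlim (hdsφ.mono fun n hn => hyE _ hn), ?_, ?_⟩
  · exact tendsto_nhds_unique_of_eventuallyEq ((hxd.comp hφ').dist hlim) tendsto_const_nhds
      (hdsφ.mono fun n hn => hy _ hn)
  · refine ge_of_tendsto ((hlim.sub_const x).inner (hcd.comp hφ')) (hdsφ.mono fun n hn => ?_)
    have hle : ‖y (x + d (φ n)) - x - d (φ n)‖ ≤ ‖y (x + d (φ n)) - x‖ := by
      rw [sub_sub, ← dist_eq_norm', ← dist_eq_norm', hy _ hn]
      exact le_dist_of_mem_frontier_cthickening hε hx (hyE _ hn)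
    have hinner : 0 ≤ ⟪y (x + d (φ n)) - x, d (φ n)⟫ := inner_nonneg_of_norm_sub_le hle
    simpa [NNReal.smul_def, inner_smul_right] using mul_nonneg (c (φ n)).coe_nonneg hinner

lemma infDist_add_cthickening_mul_le (hε : 0 ≤ ε) (hy : y ∈ closure E) (hxy : dist x y = ε)
    (d : V) : infDist (x + d) (cthickening ε E) * ε ≤ |⟪d, d⟫ - 2 * ⟪y - x, d⟫| := by
  have hsq : dist (x + d) y ^ 2 - ε ^ 2 = ⟪d, d⟫ - 2 * ⟪y - x, d⟫ := by
    rw [← hxy, dist_eq_norm', dist_eq_norm', ← sub_sub, norm_sub_sq_real,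
      real_inner_self_eq_norm_sq]
    ring
  have hinfDist : infDist (x + d) (cthickening ε E) ≤ |dist (x + d) y - ε| := by
    rw [infDist_cthickening hε (closure_nonempty_iff.1 ⟨y, hy⟩), ← infDist_closure]
    exact max_le ((sub_le_sub_right (infDist_le_dist_of_mem hy) ε).trans (le_abs_self _))
      (abs_nonneg _)
  calc infDist (x + d) (cthickening ε E) * ε
      ≤ |dist (x + d) y - ε| * |dist (x + d) y + ε| :=
        mul_le_mul hinfDist ((le_add_of_nonneg_left dist_nonneg).trans (le_abs_self _)) hε
          (abs_nonneg _)
    _ = |⟪d, d⟫ - 2 * ⟪y - x, d⟫| := by rw [← abs_mul, ← hsq]; ring_nf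

lemma tendsto_mul_infDist_cthickening {ι : Type*} {l : Filter ι} {c : ι → NNReal} {d : ι → V}
    (hε : 0 < ε) (hy : y ∈ closure E) (hxy : dist x y = ε) (hv : ⟪y - x, v⟫ = 0)
    (hd : Tendsto d l (𝓝 0)) (hcd : Tendsto (fun i => c i • d i) l (𝓝 v)) :
    Tendsto (fun i => c i * infDist (x + d i) (cthickening ε E)) l (𝓝 0) := by
  have hbound : Tendsto (fun i => |⟪d i, c i • d i⟫ - 2 * ⟪y - x, c i • d i⟫| / ε) l (𝓝 0) := by
    have hinner := (hd.inner (𝕜 := ℝ) hcd).sub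
      (((tendsto_const_nhds (x := y - x)).inner (𝕜 := ℝ) hcd).const_mul 2)
    simpa [hv] using hinner.abs.div_const ε
  refine squeeze_zero (fun i => mul_nonneg (c i).coe_nonneg infDist_nonneg) (fun i => ?_) hbound
  rw [le_div_iff₀ hε]
  calc c i * infDist (x + d i) (cthickening ε E) * ε
      = c i * (infDist (x + d i) (cthickening ε E) * ε) := mul_assoc _ _ _
    _ ≤ c i * |⟪d i, d i⟫ - 2 * ⟪y - x, d i⟫| :=
        mul_le_mul_of_nonneg_left (infDist_add_cthickening_mul_le hε.le hy hxy (d i))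
          (c i).coe_nonneg
    _ = |⟪d i, c i • d i⟫ - 2 * ⟪y - x, c i • d i⟫| := by
        rw [NNReal.smul_def, inner_smul_right, inner_smul_right, mul_left_comm, ← mul_sub,
          abs_mul, abs_of_nonneg (c i).coe_nonneg]

lemma exists_mem_frontier_inner_eq_zero_of_mem_posTangentConeAt [ProperSpace V] (hε : 0 < ε)
    (hv : v ∈ posTangentConeAt (frontier (cthickening ε E)) x) :
    ∃ y ∈ frontier E, ‖y - x‖ = ε ∧ ⟪y - x, v⟫ = 0 := by
  have hx := mem_of_mem_posTangentConeAt isClosed_frontier hv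
  obtain ⟨y, hyE, hxy, hnonneg⟩ :=
    exists_inner_sub_nonneg_of_mem_posTangentConeAt_frontier_cthickening hε.le hv
  have hnonpos : ⟪y - x, v⟫ ≤ 0 := inner_sub_nonpos_of_mem_posTangentConeAt
    (fun z hz => hxy.trans_le (le_dist_of_mem_frontier_cthickening hε.le hz hyE)) hv
  have hinfDist := infDist_eq_of_mem_frontier_cthickening hε.le hx
  exact ⟨y, mem_frontier_of_dist_eq_infDist hyE (hxy.trans hinfDist.symm) (hinfDist ▸ hε.ne'),
    (dist_eq_norm' x y).symm.trans hxy, hnonpos.antisymm hnonneg⟩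

lemma mem_posTangentConeAt_frontier_cthickening_of_inner_eq_zero [ProperSpace V] (hε : 0 < ε)
    (hv : v ∈ posTangentConeAt (cthickening ε E)ᶜ x) (hy : y ∈ closure E) (hxy : dist x y = ε)
    (horth : ⟪y - x, v⟫ = 0) : v ∈ posTangentConeAt (frontier (cthickening ε E)) x := by
  obtain ⟨c, d, hd, hds, hcd⟩ := mem_tangentConeAt_iff_exists_seq.1 hv
  have hx : x ∈ cthickening ε E := by
    rw [← cthickening_closure]
    exact mem_cthickening_of_dist_le x y ε _ hy hxy.le
  exact mem_posTangentConeAt_frontier_of_tendsto_infDist (subset_closure hx) hd hds hcd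
    (tendsto_mul_infDist_cthickening hε hy hxy horth hd hcd)

theorem tangentSet_eq_extOutward_general [ProperSpace V] (E : Set V) {ε : ℝ} (hε : 0 < ε) (x : V) :
    posTangentConeAt (frontier (cthickening ε E)) x =
      {v ∈ posTangentConeAt (cthickening ε E)ᶜ x |
        ∃ y ∈ frontier E, ‖y - x‖ = ε ∧ ⟪y - x, v⟫ = 0} := by
  ext v
  constructor
  · exact fun hv => ⟨posTangentConeAt_frontier_subset_compl _ x hv,
      exists_mem_frontier_inner_eq_zero_of_mem_posTangentConeAt hε hv⟩
  · rintro ⟨hv, y, hy, hxy, horth⟩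
    exact mem_posTangentConeAt_frontier_cthickening_of_inner_eq_zero hε hv
      (frontier_subset_closure hy) ((dist_eq_norm' x y).trans hxy) horth

end InnerProductSpace

lemma eNbhd_eq_cthickening (E : Set Plane) {ε : ℝ} (hε : 0 < ε) :
    eNbhd E ε = cthickening ε E := by
  rw [eNbhd, ← thickening_eq_biUnion_ball, closure_thickening hε]

lemma mem_outwardDirs_iff {E : Set Plane} {ε : ℝ} {x v : Plane} :
    v ∈ outwardDirs E ε x ↔ ‖v‖ = 1 ∧ v ∈ posTangentConeAt (eNbhd E ε)ᶜ x := by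
  refine and_congr_right fun hv => ⟨?_, fun h => ?_⟩
  · rintro ⟨u, hus, hu, hdir⟩
    exact mem_posTangentConeAt_of_tendsto_direction hus hu hdir
  · obtain ⟨u, hus, -, hu, hdir⟩ := exists_seq_tendsto_direction_of_mem_posTangentConeAt
      (norm_ne_zero_iff.1 (hv ▸ one_ne_zero)) h
    exact ⟨u, hus, hu, by simpa [hv] using hdir⟩

lemma mem_tangentSet_iff {E : Set Plane} {ε : ℝ} {x v : Plane} :
    v ∈ tangentSet E ε x ↔ ‖v‖ = 1 ∧ v ∈ posTangentConeAt (frontier (eNbhd E ε)) x := by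
  refine and_congr_right fun hv => ⟨?_, fun h => ?_⟩
  · rintro ⟨u, hus, -, hu, hdir⟩
    exact mem_posTangentConeAt_of_tendsto_direction hus hu hdir
  · obtain ⟨u, hus, hne, hu, hdir⟩ := exists_seq_tendsto_direction_of_mem_posTangentConeAt
      (norm_ne_zero_iff.1 (hv ▸ one_ne_zero)) h
    exact ⟨u, hus, hne, hu, by simpa [hv] using hdir⟩

lemma mem_extOutward_iff {E : Set Plane} {ε : ℝ} {x v : Plane} :
    v ∈ extOutward E ε x ↔ ‖v‖ = 1 ∧ v ∈ posTangentConeAt (eNbhd E ε)ᶜ x ∧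
      ∃ y ∈ frontier E, ‖y - x‖ = ε ∧ ⟪y - x, v⟫ = 0 := by
  simp only [extOutward, contributors, mem_ofPred_eq, mem_outwardDirs_iff, and_assoc]

/-- Extremal outward directions coincide with tangents. -/
theorem tangentSet_eq_extOutward (E : Set Plane) (hE : IsCompact E) {ε : ℝ} (hε : 0 < ε)
    (x : Plane) (hx : x ∈ frontier (eNbhd E ε)) :
    tangentSet E ε x = extOutward E ε x := by
  ext v
  rw [mem_tangentSet_iff, mem_extOutward_iff, eNbhd_eq_cthickening E hε,
    tangentSet_eq_extOutward_general E hε x, mem_ofPred_eq]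

end
end
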